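/- arXiv:1910.11287 — 2 statements merged into one kernel-verified Lean document; each statement's English description precedes it below -/
import Mathlib

section
/- Let 𝔤 be a finite-dimensional real Lie algebra with solvable radical 𝔯 (its maximal solvable ideal), and let 𝔨 ⊆ 𝔯 be a Lie subalgebra such that 𝔤, viewed as a 𝔨-module under the adjoint action, is semisimple (every 𝔨-submodule of 𝔤 admits a complementary 𝔨-submodule). Then there exists a Lie subalgebra 𝔰 of 𝔤 such that 𝔰 is a semisimple Lie algebra, 𝔤 = 𝔯 + 𝔰 with 𝔯 ∩ 𝔰 = (0), and ⁅𝔰, 𝔨⁆ = (0). -/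
/-!
Every surjection `f : L → Q` with solvable kernel onto a semisimple `Q` splits. If `ker f` is
abelian, consider the endomorphisms of `L` with values in `ker f` that are scalar on `ker f`. Modulo
the inner ones this is a `Q`-module, so by Whitehead's argument (a Casimir endomorphism separates
the invariants from the rest) some projection `φ` of `L` onto `ker f` satisfies
`⁅x, φ⁆ ∈ ad (ker f)` for all `x`. The stabilizer of `φ` still maps onto `Q`, now with central
kernel, and for a central kernel `1 - φ` is a homomorphism that factors through the splitting. The
general case follows by induction on the derived length of the kernel.

For `𝔨 ⊆ 𝔯` with an `𝔨`-stable complement `N` of `𝔯` one has `⁅𝔨, N⁆ ⊆ 𝔯 ∩ N = 0`. Hence the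
centralizer of `𝔨` maps onto `𝔤 ⧸ 𝔯`, and a Levi subalgebra can be found inside it.
-/

namespace LeviDecomposition

open LieAlgebra LieModule Module

attribute [local instance] LieRing.ofAssociativeRing

section Homomorphisms

variable {R L A Q : Type*} [CommRing R] [LieRing L] [LieAlgebra R L] [LieRing A] [LieAlgebra R A]
  [LieRing Q] [LieAlgebra R Q]

theorem exists_comp_eq_of_ker_le {f : L →ₗ⁅R⁆ Q} (hf : Function.Surjective f) {g : L →ₗ⁅R⁆ A}
    (hfg : f.ker ≤ g.ker) : ∃ g' : Q →ₗ⁅R⁆ A, g'.comp f = g := by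
  have factor {x y : L} (hxy : f x = f y) : g x = g y := by
    rw [← sub_eq_zero, ← map_sub] at hxy ⊢
    exact hfg hxy
  have apply_inv := Function.surjInv_eq hf
  refine ⟨{ toFun := fun q => g (Function.surjInv hf q)
            map_add' := fun p q => ?_
            map_smul' := fun c q => ?_
            map_lie' := fun {p q} => ?_ }, ?_⟩
  · rw [← map_add]
    exact factor (by simp only [map_add, apply_inv])
  · rw [RingHom.id_apply, ← map_smul]
    exact factor (by simp only [map_smul, apply_inv])
  · rw [← LieHom.map_lie]
    exact factor (by simp only [LieHom.map_lie, apply_inv])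
  · ext x
    exact factor (apply_inv (f x))

/-- The projection `L → L ⧸ I` as a homomorphism of Lie algebras. -/
def quotientMk (I : LieIdeal R L) : L →ₗ⁅R⁆ L ⧸ I where
  __ := LieSubmodule.Quotient.mk' I
  map_lie' := LieSubmodule.Quotient.mk_bracket I _ _

theorem quotientMk_surjective (I : LieIdeal R L) : Function.Surjective (quotientMk I) :=
  LieSubmodule.Quotient.surjective_mk' I

@[simp]
theorem ker_quotientMk (I : LieIdeal R L) : (quotientMk I).ker = I := by
  ext x
  exact (quotientMk I).mem_ker.trans LieSubmodule.Quotient.mk_eq_zero'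

theorem isCompl_ker_range_of_comp_eq_id {f : L →ₗ⁅R⁆ Q} {g : Q →ₗ⁅R⁆ L}
    (h : f.comp g = LieHom.id) : IsCompl f.ker.toSubmodule g.range.toSubmodule := by
  have apply_apply (q : Q) : f (g q) = q := LieHom.congr_fun h q
  constructor
  · rw [Submodule.disjoint_def]
    rintro _ hx ⟨q, rfl⟩
    have : f (g q) = 0 := hx
    rw [apply_apply] at this
    exact (congrArg g this).trans g.map_zero
  · rw [codisjoint_iff_le_sup]
    intro x _
    refine Submodule.mem_sup.mpr ⟨x - g (f x), ?_, g (f x), ⟨f x, rfl⟩, sub_add_cancel _ _⟩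
    exact f.mem_ker.mpr (by rw [map_sub, apply_apply, sub_self])

end Homomorphisms

section Solvable

variable {R L A : Type*} [CommRing R] [LieRing L] [LieAlgebra R L] [LieRing A] [LieAlgebra R A]

theorem map_derivedSeriesOfIdeal_le (f : L →ₗ⁅R⁆ A) {I : LieIdeal R L} {J : LieIdeal R A}
    (h : I.map f ≤ J) (k : ℕ) :
    (derivedSeriesOfIdeal R L k I).map f ≤ derivedSeriesOfIdeal R A k J := by
  induction k with
  | zero => exact h
  | succ k ih =>
    rw [derivedSeriesOfIdeal_succ, derivedSeriesOfIdeal_succ]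
    exact (LieIdeal.map_bracket_le f).trans (LieSubmodule.mono_lie ih ih)

theorem isSolvable_ideal_iff {I : LieIdeal R L} :
    IsSolvable I ↔ ∃ k, derivedSeriesOfIdeal R L k I = ⊥ := by
  simp only [LieAlgebra.isSolvable_iff R, LieIdeal.derivedSeries_eq_bot_iff]

theorem isSolvable_comap (f : L →ₗ⁅R⁆ A) [IsSolvable f.ker] (J : LieIdeal R A) [IsSolvable J] :
    IsSolvable (J.comap f) := by
  obtain ⟨k, hk⟩ := isSolvable_ideal_iff.mp ‹IsSolvable J›
  obtain ⟨l, hl⟩ := isSolvable_ideal_iff.mp ‹IsSolvable f.ker›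
  have le_ker : derivedSeriesOfIdeal R L k (J.comap f) ≤ f.ker := by
    rw [LieHom.ker, ← LieIdeal.map_le_iff_le_comap, ← hk]
    exact map_derivedSeriesOfIdeal_le f LieIdeal.map_comap_le k
  refine isSolvable_ideal_iff.mpr ⟨l + k, ?_⟩
  rw [derivedSeriesOfIdeal_add, eq_bot_iff, ← hl]
  exact derivedSeriesOfIdeal_mono le_ker l

end Solvable

section TrivialRadical

theorem eq_bot_of_comap_le_ker {R L A : Type*} [CommRing R] [LieRing L] [LieAlgebra R L]
    [LieRing A] [LieAlgebra R A] {f : L →ₗ⁅R⁆ A} (hf : Function.Surjective f) {J : LieIdeal R A}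
    (h : J.comap f ≤ f.ker) : J = ⊥ := by
  rw [LieSubmodule.eq_bot_iff]
  intro y hy
  obtain ⟨x, rfl⟩ := hf y
  exact f.mem_ker.mp (h (LieIdeal.mem_comap.mpr hy))

theorem hasTrivialRadical_quotient_radical {R L : Type*} [CommRing R] [LieRing L] [LieAlgebra R L]
    [IsNoetherian R L] : HasTrivialRadical R (L ⧸ radical R L) := by
  rw [hasTrivialRadical_iff_no_solvable_ideals]
  intro J hJ
  have : IsSolvable (quotientMk (radical R L)).ker := by
    rw [ker_quotientMk]
    infer_instance
  apply eq_bot_of_comap_le_ker (quotientMk_surjective (radical R L))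
  rw [ker_quotientMk, ← LieIdeal.solvable_iff_le_radical]
  exact isSolvable_comap _ J

variable {K L A Q : Type*} [Field K] [CharZero K] [LieRing L] [LieAlgebra K L]
  [LieRing A] [LieAlgebra K A] [LieRing Q] [LieAlgebra K Q] [FiniteDimensional K Q]
  [HasTrivialRadical K Q]

-- A solvable ideal upstairs is moved into a complement of the kernel, where the map is injective.
theorem hasTrivialRadical_of_surjective {f : Q →ₗ⁅K⁆ A} (hf : Function.Surjective f) :
    HasTrivialRadical K A := by
  rw [hasTrivialRadical_iff_no_solvable_ideals]
  intro J hJ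
  have hC := LieIdeal.isCompl_killingCompl (K := K) f.ker
  set C := LieIdeal.killingCompl K Q f.ker
  have : IsSolvable ↥(J.comap f ⊓ C) := by
    obtain ⟨k, hk⟩ := isSolvable_ideal_iff.mp hJ
    refine isSolvable_ideal_iff.mpr ⟨k, ?_⟩
    rw [eq_bot_iff, ← hC.inf_eq_bot]
    refine le_inf ?_ ((derivedSeriesOfIdeal_le_self _ k).trans inf_le_right)
    rw [LieHom.ker, ← LieIdeal.map_le_iff_le_comap, ← hk]
    exact map_derivedSeriesOfIdeal_le f (LieIdeal.map_le_iff_le_comap.mpr inf_le_left) k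
  have inf_eq_bot : J.comap f ⊓ C = ⊥ := HasTrivialRadical.eq_bot_of_isSolvable _
  have ker_le : f.ker ≤ J.comap f := LieIdeal.comap_mono bot_le
  apply eq_bot_of_comap_le_ker hf
  calc J.comap f = (f.ker ⊔ C) ⊓ J.comap f := by rw [hC.sup_eq_top, top_inf_eq]
    _ = f.ker ⊔ J.comap f ⊓ C := by rw [sup_inf_assoc_of_le _ ker_le, inf_comm C]
    _ ≤ f.ker := by rw [inf_eq_bot, sup_bot_eq]

theorem hasTrivialRadical_range (g : Q →ₗ⁅K⁆ A) : HasTrivialRadical K g.range :=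
  hasTrivialRadical_of_surjective g.surjective_rangeRestrict

theorem hasTrivialRadical_range_of_ker_le {f : L →ₗ⁅K⁆ Q} (hf : Function.Surjective f)
    {g : L →ₗ⁅K⁆ A} (hfg : f.ker ≤ g.ker) : HasTrivialRadical K g.range := by
  obtain ⟨g', rfl⟩ := exists_comp_eq_of_ker_le hf hfg
  have range_eq : (g'.comp f).range = g'.range := by
    ext y
    simp [hf.exists]
  rw [range_eq]
  exact hasTrivialRadical_range g'

end TrivialRadical

section TraceForm

instance (R L M : Type*) [CommRing R] [LieRing L] [LieAlgebra R L] [AddCommGroup M] [Module R M]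
    [LieRingModule L M] [LieModule R L M] [IsFaithful R L M] (I : LieIdeal R L) :
    IsFaithful R I M where
  injective_toEnd :=
    (IsFaithful.injective_toEnd (R := R) (L := L) (M := M)).comp Subtype.val_injective

theorem isNilpotent_of_isFaithful (R L M : Type*) [CommRing R] [LieRing L] [LieAlgebra R L]
    [IsNoetherian R L] [AddCommGroup M] [Module R M] [LieRingModule L M] [LieModule R L M]
    [IsFaithful R L M] [LieModule.IsNilpotent L M] : LieRing.IsNilpotent L := by
  rw [LieAlgebra.isNilpotent_iff_forall (R := R)]
  intro x
  obtain ⟨n, hn⟩ := ad_nilpotent_of_nilpotent (R := R) (isNilpotent_toEnd_of_isNilpotent R L M x)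
  have intertwine : (ad R (End R M) (toEnd R L M x)).comp (toEnd R L M : L →ₗ[R] End R M) =
      (toEnd R L M : L →ₗ[R] End R M).comp (ad R L x) := by
    ext y : 1
    exact (LieHom.map_lie (toEnd R L M) x y).symm
  refine ⟨n, LinearMap.ext fun y => IsFaithful.injective_toEnd (R := R) (M := M) ?_⟩
  have := LinearMap.congr_fun (Module.End.commute_pow_left_of_commute intertwine n) y
  rw [hn] at this
  simpa using this.symm

variable {K L M : Type*} [Field K] [CharZero K] [LieRing L] [LieAlgebra K L]
  [FiniteDimensional K L] [AddCommGroup M] [Module K M] [FiniteDimensional K M]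
  [LieRingModule L M] [LieModule K L M] [IsFaithful K L M]

theorem isSolvable_of_traceForm_eq_zero (h : traceForm K L M = 0) : IsSolvable L := by
  have := LieModule.isNilpotent_derivedSeries_of_traceForm_eq_zero h
  have := isNilpotent_of_isFaithful K (derivedSeries K L 1) M
  obtain ⟨k, hk⟩ := isSolvable_ideal_iff.mp
    (inferInstance : IsSolvable (derivedSeries K L 1))
  refine IsSolvable.mk (R := K) (k := k + 1) ?_
  rw [derivedSeries_def, derivedSeriesOfIdeal_add]
  exact hk

theorem traceForm_nondegenerate_of_hasTrivialRadical [HasTrivialRadical K L] :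
    (traceForm K L M).Nondegenerate := by
  let I := InvariantForm.orthogonal (traceForm K L M) (traceForm_lieInvariant K L M) ⊤
  have mem_I (x : L) : x ∈ I ↔ ∀ y, traceForm K L M y x = 0 := by
    simp [I, InvariantForm.mem_orthogonal]
  have : traceForm K I M = 0 := by
    ext x y
    exact (mem_I y).mp y.2 x
  have := isSolvable_of_traceForm_eq_zero this
  have I_eq_bot : I = ⊥ := HasTrivialRadical.eq_bot_of_isSolvable I
  have separating (x : L) (hx : ∀ y, traceForm K L M y x = 0) : x = 0 := by
    rwa [← mem_I, I_eq_bot, LieSubmodule.mem_bot] at hx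
  exact ⟨fun x hx => separating x fun y => traceForm_comm K L M y x ▸ hx y, separating⟩

end TraceForm

section Casimir

variable {ι K L M : Type*} [Fintype ι] [DecidableEq ι] [Field K] [LieRing L] [LieAlgebra K L]
  [AddCommGroup M] [Module K M] [LieRingModule L M] [LieModule K L M]
  (h : (traceForm K L M).Nondegenerate) (b : Basis ι K L)

/-- The Casimir endomorphism `∑ i, φ (b i) ∘ φ (b' i)` of a representation `φ = toEnd K L M` with
nondegenerate trace form, where `b'` is the basis dual to `b` under that form. -/
noncomputable def casimir : End K M :=
  ∑ i, toEnd K L M (b i) * toEnd K L M ((traceForm K L M).dualBasis h b i)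

theorem commute_toEnd_casimir (x : L) : Commute (toEnd K L M x) (casimir h b) := by
  let B := traceForm K L M
  let φ := toEnd K L M
  let b' := B.dualBasis h b
  have symm : B.IsSymm := ⟨traceForm_comm K L M⟩
  have dual_dual : B.dualBasis h b' = b := LinearMap.BilinForm.dualBasis_dualBasis h symm b
  have expand_b (i : ι) : ⁅x, b i⁆ = ∑ j, B ⁅x, b i⁆ (b' j) • b j := by
    conv_lhs => rw [← b.sum_repr ⁅x, b i⁆]
    refine Finset.sum_congr rfl fun j _ => ?_
    rw [← LinearMap.BilinForm.dualBasis_repr_apply h, dual_dual]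
  have expand_b' (i : ι) : ⁅x, b' i⁆ = -∑ j, B ⁅x, b j⁆ (b' i) • b' j := by
    rw [← b'.sum_repr ⁅x, b' i⁆, ← Finset.sum_neg_distrib]
    refine Finset.sum_congr rfl fun j _ => ?_
    rw [LinearMap.BilinForm.dualBasis_repr_apply, ← neg_smul, ← lie_skew x (b' i), map_neg,
      LinearMap.neg_apply, traceForm_apply_lie_apply, traceForm_comm]
  have leibniz (i : ι) : ⁅φ x, φ (b i) * φ (b' i)⁆ =
      φ ⁅x, b i⁆ * φ (b' i) + φ (b i) * φ ⁅x, b' i⁆ := by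
    simp only [LieHom.map_lie, Ring.lie_def]
    noncomm_ring
  rw [commute_iff_lie_eq, casimir, lie_sum]
  calc ∑ i, ⁅φ x, φ (b i) * φ (b' i)⁆
      = ∑ i, ∑ j, B ⁅x, b i⁆ (b' j) • (φ (b j) * φ (b' i))
          - ∑ i, ∑ j, B ⁅x, b j⁆ (b' i) • (φ (b i) * φ (b' j)) := by
        rw [← Finset.sum_sub_distrib]
        refine Finset.sum_congr rfl fun i _ => ?_
        rw [leibniz, congrArg φ (expand_b i), congrArg φ (expand_b' i)]
        simp only [map_sum, map_neg, map_smul, Finset.sum_mul, Finset.mul_sum, smul_mul_assoc,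
          mul_smul_comm, mul_neg, sub_eq_add_neg]
    _ = 0 := by rw [Finset.sum_comm, sub_self]

theorem casimir_apply_mem {N : Submodule K M} (hN : ∀ (x : L) (m : M), ⁅x, m⁆ ∈ N) (m : M) :
    casimir h b m ∈ N := by
  rw [casimir, LinearMap.sum_apply]
  exact sum_mem fun i _ => hN _ _

theorem trace_casimir : LinearMap.trace K M (casimir h b) = finrank K L := by
  have trace_term (i : ι) : LinearMap.trace K M
      (toEnd K L M (b i) * toEnd K L M ((traceForm K L M).dualBasis h b i)) = 1 :=
    (LinearMap.BilinForm.apply_dualBasis_right h ⟨traceForm_comm K L M⟩ b i i).trans (if_pos rfl)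
  simp only [casimir, map_sum, trace_term, Finset.sum_const, Finset.card_univ, nsmul_eq_mul,
    mul_one, finrank_eq_card_basis b]

end Casimir

section Whitehead

variable {K L M : Type*} [Field K] [CharZero K] [LieRing L] [LieAlgebra K L]
  [AddCommGroup M] [Module K M] [FiniteDimensional K M]
  [LieRingModule L M] [LieModule K L M]

-- The Casimir endomorphism has nonzero trace, so its Fitting null component is not all of `M`,
-- while its Fitting one component lies in the span of the `⁅x, m⁆`.
theorem exists_ne_top_sup_lie_top_eq_top [HasTrivialRadical K (toEnd K L M).range]
    (hM : ¬ IsTrivial L M) : ∃ M₀ : LieSubmodule K L M, M₀ ≠ ⊤ ∧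
      M₀ ⊔ ⁅(⊤ : LieIdeal K L), (⊤ : LieSubmodule K L M)⁆ = ⊤ := by
  let A := (toEnd K L M).range
  let Ω := casimir (traceForm_nondegenerate_of_hasTrivialRadical (L := A) (M := M)) (finBasis K A)
  have Ω_mem (m : M) : Ω m ∈ ⁅(⊤ : LieIdeal K L), (⊤ : LieSubmodule K L M)⁆ := by
    refine casimir_apply_mem (N := LieSubmodule.toSubmodule ⁅⊤, ⊤⁆) _ _ ?_ m
    rintro ⟨_, x, rfl⟩ m
    exact LieSubmodule.lie_mem_lie (LieSubmodule.mem_top x) (LieSubmodule.mem_top m)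
  have Ω_comm (x : L) : Commute (toEnd K L M x) Ω :=
    commute_toEnd_casimir _ _ (⟨toEnd K L M x, x, rfl⟩ : A)
  have trace_ne : LinearMap.trace K M Ω ≠ 0 := by
    rw [trace_casimir, Nat.cast_ne_zero]
    contrapose hM
    have := finrank_zero_iff.mp hM
    refine ⟨fun x m => ?_⟩
    have : (⟨toEnd K L M x, x, rfl⟩ : A) = 0 := Subsingleton.elim _ _
    exact LinearMap.congr_fun (congrArg Subtype.val this) m
  obtain ⟨k, hk⟩ := Filter.eventually_atTop.mp Ω.eventually_isCompl_ker_pow_range_pow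
  let M₀ : LieSubmodule K L M :=
    { LinearMap.ker (Ω ^ (k + 1)) with
      lie_mem := fun {x m} (hm : (Ω ^ (k + 1)) m = 0) => show (Ω ^ (k + 1)) ⁅x, m⁆ = 0 by
        have := LinearMap.congr_fun ((Ω_comm x).pow_right (k + 1)).eq m
        rw [Module.End.mul_apply, hm, map_zero] at this
        exact this.symm }
  refine ⟨M₀, fun M₀_eq => trace_ne ?_, ?_⟩
  · have ker_eq : LinearMap.ker (Ω ^ (k + 1)) = ⊤ := congrArg LieSubmodule.toSubmodule M₀_eq
    have nilpotent : _root_.IsNilpotent Ω := ⟨k + 1, LinearMap.ker_eq_top.mp ker_eq⟩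
    exact (LinearMap.isNilpotent_trace_of_isNilpotent nilpotent).eq_zero
  · rw [← LieSubmodule.toSubmodule_inj, LieSubmodule.sup_toSubmodule, LieSubmodule.top_toSubmodule,
      eq_top_iff, ← (hk (k + 1) k.le_succ).sup_eq_top]
    refine sup_le_sup_left ?_ _
    rintro _ ⟨m, rfl⟩
    rw [pow_succ']
    exact Ω_mem _

theorem lie_top_sup_maxTrivSubmodule_eq_top [HasTrivialRadical K (toEnd K L M).range] :
    ⁅(⊤ : LieIdeal K L), (⊤ : LieSubmodule K L M)⁆ ⊔ maxTrivSubmodule K L M = ⊤ := by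
  induction hn : finrank K M using Nat.strong_induction_on generalizing M with
  | _ n ih =>
  by_cases hM : IsTrivial L M
  · rw [(isTrivial_iff_max_triv_eq_top K L M).mp hM, sup_top_eq]
  obtain ⟨M₀, M₀_ne, sup_eq⟩ := exists_ne_top_sup_lie_top_eq_top (K := K) hM
  have : HasTrivialRadical K (toEnd K L M₀).range := by
    apply hasTrivialRadical_range_of_ker_le (toEnd K L M).surjective_rangeRestrict
    intro x hx
    have hx : toEnd K L M x = 0 := congrArg Subtype.val hx
    exact LinearMap.ext fun m => Subtype.ext (LinearMap.congr_fun hx m)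
  have finrank_lt : finrank K M₀ < n :=
    hn ▸ Submodule.finrank_lt (mt (LieSubmodule.toSubmodule_eq_top _).mp M₀_ne)
  have le_sup : M₀ ≤ ⁅(⊤ : LieIdeal K L), (⊤ : LieSubmodule K L M)⁆ ⊔ maxTrivSubmodule K L M := by
    calc M₀ = (⊤ : LieSubmodule K L M₀).map M₀.incl := by simp
      _ = ⁅(⊤ : LieIdeal K L), (⊤ : LieSubmodule K L M₀).map M₀.incl⁆ ⊔
          (maxTrivSubmodule K L M₀).map M₀.incl := by
        rw [← LieSubmodule.map_bracket_eq, ← LieSubmodule.map_sup, ih _ finrank_lt rfl]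
      _ ≤ _ := by
        refine sup_le_sup (LieSubmodule.mono_lie_right _ le_top) ?_
        rintro _ ⟨m, hm, rfl⟩ x
        exact congrArg Subtype.val (hm x)
  exact eq_top_iff.mpr (sup_eq.ge.trans (sup_le le_sup le_sup_left))

theorem exists_mem_lie_top_forall_lie_sub_mem {Q : Type*} [LieRing Q] [LieAlgebra K Q]
    [FiniteDimensional K Q] [HasTrivialRadical K Q] {f : L →ₗ⁅K⁆ Q} (hf : Function.Surjective f)
    {P : LieSubmodule K L M} (hP : ∀ x ∈ f.ker, ∀ m, ⁅x, m⁆ ∈ P) (m : M) :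
    ∃ v ∈ ⁅(⊤ : LieIdeal K L), (⊤ : LieSubmodule K L M)⁆, ∀ x : L, ⁅x, m - v⁆ ∈ P := by
  let π := LieSubmodule.Quotient.mk' P
  have : FiniteDimensional K (M ⧸ P) := inferInstanceAs (FiniteDimensional K (M ⧸ P.toSubmodule))
  have : HasTrivialRadical K (toEnd K L (M ⧸ P)).range := by
    refine hasTrivialRadical_range_of_ker_le hf fun x hx => LinearMap.ext fun q => ?_
    obtain ⟨m, rfl⟩ := LieSubmodule.Quotient.surjective_mk' P q
    exact (LieSubmodule.Quotient.mk_eq_zero P).mpr (hP x hx m)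
  have π_mem : π m ∈ (⁅(⊤ : LieIdeal K L), (⊤ : LieSubmodule K L M)⁆.map π) ⊔
      maxTrivSubmodule K L (M ⧸ P) := by
    rw [LieSubmodule.map_bracket_eq, LieModuleHom.map_top, LieSubmodule.Quotient.range_mk',
      lie_top_sup_maxTrivSubmodule_eq_top]
    exact LieSubmodule.mem_top _
  obtain ⟨_, ⟨v, hv, rfl⟩, t, ht, eq⟩ := (LieSubmodule.mem_sup _ _ _).mp π_mem
  refine ⟨v, hv, fun x => ?_⟩
  have π_sub : π (m - v) = t := by rw [map_sub, ← eq]; exact add_sub_cancel_left _ _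
  rw [← LieSubmodule.Quotient.mk_eq_zero, LieModuleHom.map_lie]
  exact (congrArg _ π_sub).trans (ht x)

end Whitehead

section Projection

variable {R L M : Type*} [CommRing R] [LieRing L] [LieAlgebra R L] [AddCommGroup M] [Module R M]
  [LieRingModule L M] [LieModule R L M]

/-- The endomorphisms of `M` with values in `N` that act on `N` as a scalar. Projections onto `N`
are among them, and `L` moves each of them to one vanishing on `N`. -/
def endScalarOn (N : LieSubmodule R L M) : LieSubmodule R L (M →ₗ[R] M) where
  carrier := {φ | (∀ m, φ m ∈ N) ∧ ∃ c : R, ∀ n ∈ N, φ n = c • n}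
  add_mem' := by
    rintro φ ψ ⟨hφ, c, hc⟩ ⟨hψ, d, hd⟩
    refine ⟨fun m => add_mem (hφ m) (hψ m), c + d, fun n hn => ?_⟩
    rw [LinearMap.add_apply, hc n hn, hd n hn, add_smul]
  zero_mem' := ⟨fun _ => zero_mem N, 0, fun n _ => (zero_smul R n).symm⟩
  smul_mem' := by
    rintro r φ ⟨hφ, c, hc⟩
    refine ⟨fun m => N.smul_mem r (hφ m), r * c, fun n hn => ?_⟩
    rw [LinearMap.smul_apply, hc n hn, mul_smul]
  lie_mem := by
    rintro x φ ⟨hφ, c, hc⟩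
    refine ⟨fun m => sub_mem (N.lie_mem (hφ m)) (hφ _), 0, fun n hn => ?_⟩
    rw [LieHom.lie_apply, hc n hn, hc _ (N.lie_mem hn), lie_smul, sub_self, zero_smul]

theorem lie_apply_eq_zero_of_mem_endScalarOn {N : LieSubmodule R L M} {φ : M →ₗ[R] M}
    (hφ : φ ∈ endScalarOn N) (x : L) {n : M} (hn : n ∈ N) : ⁅x, φ⁆ n = 0 := by
  obtain ⟨-, c, hc⟩ := hφ
  rw [LieHom.lie_apply, hc n hn, hc _ (N.lie_mem hn), lie_smul, sub_self]

/-- The adjoint representation as a homomorphism of `L`-modules. -/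
def adModuleHom (R L : Type*) [CommRing R] [LieRing L] [LieAlgebra R L] :
    L →ₗ⁅R, L⁆ L →ₗ[R] L where
  __ := (ad R L : L →ₗ[R] End R L)
  map_lie' {x y} := LieHom.map_lie (ad R L) x y

theorem lie_eq_ad_neg_smul {I : LieIdeal R L} (hab : ∀ x ∈ I, ∀ y ∈ I, ⁅x, y⁆ = 0)
    {φ : L →ₗ[R] L} (hφ : ∀ y, φ y ∈ I) {c : R} (hc : ∀ y ∈ I, φ y = c • y) {x : L} (hx : x ∈ I) :
    ⁅x, φ⁆ = ad R L (-(c • x)) := by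
  refine LinearMap.ext fun y => ?_
  rw [LieHom.lie_apply, hab x hx _ (hφ y), hc _ (lie_mem_left R L I x y hx), zero_sub, ad_apply,
    neg_lie, smul_lie]

/-- The subalgebra of the elements of `L` that annihilate every element of `s`. For `M = L` it is
the centralizer of `s`. -/
def annihilator (R L : Type*) {M : Type*} [CommRing R] [LieRing L] [LieAlgebra R L]
    [AddCommGroup M] [Module R M] [LieRingModule L M] [LieModule R L M] (s : Set M) :
    LieSubalgebra R L where
  carrier := {x | ∀ m ∈ s, ⁅x, m⁆ = 0}
  add_mem' hx hy m hm := by rw [add_lie, hx m hm, hy m hm, add_zero]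
  zero_mem' m _ := zero_lie m
  smul_mem' c x hx m hm := by rw [smul_lie, hx m hm, smul_zero]
  lie_mem' hx hy m hm := by rw [lie_lie, hx m hm, hy m hm, lie_zero, lie_zero, sub_zero]

end Projection

section AbelianKernel

variable {K L Q : Type*} [Field K] [CharZero K] [LieRing L] [LieAlgebra K L]
  [FiniteDimensional K L] [LieRing Q] [LieAlgebra K Q] [FiniteDimensional K Q]
  [HasTrivialRadical K Q] {f : L →ₗ⁅K⁆ Q}

theorem exists_isProj_forall_lie_eq_ad (hf : Function.Surjective f)
    (hab : ∀ x ∈ f.ker, ∀ y ∈ f.ker, ⁅x, y⁆ = 0) :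
    ∃ φ : L →ₗ[K] L, LinearMap.IsProj f.ker.toSubmodule φ ∧
      ∀ x : L, ∃ a ∈ f.ker, ⁅x, φ⁆ = ad K L a := by
  let W := endScalarOn (R := K) f.ker
  let P : LieSubmodule K L W := LieSubmodule.comap W.incl (LieSubmodule.map (adModuleHom K L) f.ker)
  obtain ⟨p, hp⟩ := LinearMap.exists_extend (p := f.ker.toSubmodule) LinearMap.id
  have p_apply (y : L) (hy : y ∈ f.ker) : (p y : L) = y :=
    congrArg Subtype.val (LinearMap.congr_fun hp ⟨y, hy⟩)
  let φ₀ : W := ⟨f.ker.toSubmodule.subtype ∘ₗ p, fun y => (p y).2, 1, fun y hy =>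
    (p_apply y hy).trans (one_smul K y).symm⟩
  have ker_lie_mem (x : L) (hx : x ∈ f.ker) (w : W) : ⁅x, w⁆ ∈ P := by
    obtain ⟨φ, hφ, c, hc⟩ := w
    exact ⟨-(c • x), neg_mem (f.ker.smul_mem c hx), (lie_eq_ad_neg_smul hab hφ hc hx).symm⟩
  obtain ⟨v, hv, lie_mem⟩ := exists_mem_lie_top_forall_lie_sub_mem hf ker_lie_mem φ₀
  have v_vanishes (y : L) (hy : y ∈ f.ker) : (v : L →ₗ[K] L) y = 0 := by
    rw [← LieSubmodule.mem_toSubmodule, LieSubmodule.lieIdeal_oper_eq_linear_span'] at hv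
    let evalAt : W →ₗ[K] L := LinearMap.applyₗ y ∘ₗ W.toSubmodule.subtype
    refine Submodule.span_le (p := LinearMap.ker evalAt).mpr ?_ hv
    rintro _ ⟨x, -, w, -, rfl⟩
    exact lie_apply_eq_zero_of_mem_endScalarOn w.2 x hy
  refine ⟨(φ₀ - v : W), ⟨(φ₀ - v).2.1, fun y hy => ?_⟩, fun x => ?_⟩
  · change (p y : L) - (v : L →ₗ[K] L) y = y
    rw [v_vanishes y hy, sub_zero, p_apply y hy]
  · obtain ⟨a, ha, ad_eq⟩ := lie_mem x
    exact ⟨a, ha, ad_eq.symm⟩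

theorem exists_surjective_comp_incl_ker_le_center (hf : Function.Surjective f)
    (hab : ∀ x ∈ f.ker, ∀ y ∈ f.ker, ⁅x, y⁆ = 0) :
    ∃ S : LieSubalgebra K L, Function.Surjective (f.comp S.incl) ∧
      (f.comp S.incl).ker ≤ center K S := by
  obtain ⟨φ, hφ, lie_φ⟩ := exists_isProj_forall_lie_eq_ad hf hab
  have ker_lie_φ (a : L) (ha : a ∈ f.ker) : ⁅a, φ⁆ = ad K L (-a) := by
    have apply_eq (y : L) (hy : y ∈ f.ker) : φ y = (1 : K) • y :=
      (hφ.map_id y hy).trans (one_smul K y).symm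
    rw [lie_eq_ad_neg_smul hab hφ.map_mem apply_eq ha, one_smul]
  let S := annihilator K L {φ}
  have mem_S (x : L) : x ∈ S ↔ ⁅x, φ⁆ = 0 :=
    ⟨fun h => h φ rfl, fun h _ hm => hm ▸ h⟩
  refine ⟨S, fun q => ?_, ?_⟩
  · obtain ⟨x, rfl⟩ := hf q
    obtain ⟨a, ha, hxa⟩ := lie_φ x
    have add_mem_S : x + a ∈ S := by
      rw [mem_S, add_lie, hxa, ker_lie_φ a ha, ← map_add, add_neg_cancel, map_zero]
    refine ⟨⟨x + a, add_mem_S⟩, ?_⟩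
    exact (map_add f x a).trans (by rw [f.mem_ker.mp ha, add_zero])
  · rintro ⟨a, haS⟩ ha
    have ad_neg : ad K L (-a) = 0 := (ker_lie_φ a ha).symm.trans ((mem_S a).mp haS)
    rintro ⟨y, hy⟩
    rw [← Subtype.coe_inj]
    exact (lie_skew y a).symm.trans ((neg_lie a y).symm.trans (LinearMap.congr_fun ad_neg y))

theorem exists_comp_eq_id_of_ker_le_center (hf : Function.Surjective f)
    (hc : f.ker ≤ center K L) : ∃ g : Q →ₗ⁅K⁆ L, f.comp g = LieHom.id := by
  have lie_ker (x a : L) (ha : a ∈ f.ker) : ⁅x, a⁆ = 0 := hc ha x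
  have ker_lie (x a : L) (ha : a ∈ f.ker) : ⁅a, x⁆ = 0 := by
    rw [← lie_skew, lie_ker x a ha, neg_zero]
  obtain ⟨φ, hφ, lie_φ⟩ := exists_isProj_forall_lie_eq_ad hf fun x _ y => lie_ker x y
  have φ_lie (x y : L) : φ ⁅x, y⁆ = 0 := by
    obtain ⟨a, ha, hxa⟩ := lie_φ x
    have := LinearMap.congr_fun hxa y
    rwa [LieHom.lie_apply, ad_apply, ker_lie y a ha, lie_ker x _ (hφ.map_mem y), zero_sub,
      neg_eq_zero] at this
  let h : L →ₗ⁅K⁆ L :=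
    { LinearMap.id - φ with
      map_lie' {x y} := by
        change ⁅x, y⁆ - φ ⁅x, y⁆ = ⁅x - φ x, y - φ y⁆
        rw [φ_lie, sub_lie, ker_lie _ _ (hφ.map_mem x), lie_sub, lie_ker _ _ (hφ.map_mem y),
          sub_zero, sub_zero] }
  obtain ⟨g, hg⟩ := exists_comp_eq_of_ker_le hf (g := h) fun x hx =>
    sub_eq_zero.mpr (hφ.map_id x hx).symm
  refine ⟨g, LieHom.ext fun q => ?_⟩
  obtain ⟨x, rfl⟩ := hf q
  calc f (g (f x)) = f (x - φ x) := congrArg f (LieHom.congr_fun hg x)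
    _ = f x := by rw [map_sub, f.mem_ker.mp (hφ.map_mem x), sub_zero]

theorem exists_comp_eq_id_of_abelian_ker (hf : Function.Surjective f)
    (hab : ∀ x ∈ f.ker, ∀ y ∈ f.ker, ⁅x, y⁆ = 0) : ∃ g : Q →ₗ⁅K⁆ L, f.comp g = LieHom.id := by
  obtain ⟨S, surj, central⟩ := exists_surjective_comp_incl_ker_le_center hf hab
  obtain ⟨g, hg⟩ := exists_comp_eq_id_of_ker_le_center surj central
  exact ⟨S.incl.comp g, hg⟩

end AbelianKernel

section Levi

variable {K L Q : Type*} [Field K] [CharZero K] [LieRing L] [LieAlgebra K L]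
  [FiniteDimensional K L] [LieRing Q] [LieAlgebra K Q] [FiniteDimensional K Q]
  [HasTrivialRadical K Q] {f : L →ₗ⁅K⁆ Q}

-- A section of `L ⧸ ⁅ker f, ker f⁆ → Q` pulls back to a subalgebra of `L`.
theorem exists_surjective_comp_incl_ker_le_comap_lie (hf : Function.Surjective f) :
    ∃ S : LieSubalgebra K L, Function.Surjective (f.comp S.incl) ∧
      (f.comp S.incl).ker ≤ (⁅f.ker, f.ker⁆ : LieIdeal K L).comap S.incl := by
  let I : LieIdeal K L := ⁅f.ker, f.ker⁆
  let π := quotientMk I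
  have π_surj : Function.Surjective π := quotientMk_surjective I
  have : FiniteDimensional K (L ⧸ I) := inferInstanceAs (FiniteDimensional K (L ⧸ I.toSubmodule))
  have π_eq_zero (x : L) : π x = 0 ↔ x ∈ I := by rw [← LieHom.mem_ker, ker_quotientMk]
  obtain ⟨f', hf'⟩ : ∃ f' : L ⧸ I →ₗ⁅K⁆ Q, f'.comp π = f :=
    exists_comp_eq_of_ker_le π_surj <|
      (ker_quotientMk I).trans_le (LieSubmodule.lie_le_left f.ker f.ker)
  have f'_apply (x : L) : f' (π x) = f x := LieHom.congr_fun hf' x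
  have f'_surj : Function.Surjective f' := fun q =>
    let ⟨x, hx⟩ := hf q
    ⟨π x, (f'_apply x).trans hx⟩
  have abelian : ∀ x ∈ f'.ker, ∀ y ∈ f'.ker, ⁅x, y⁆ = 0 := by
    intro x hx y hy
    obtain ⟨x, rfl⟩ := π_surj x
    obtain ⟨y, rfl⟩ := π_surj y
    rw [LieHom.mem_ker, f'_apply] at hx hy
    rw [← LieHom.map_lie, π_eq_zero]
    exact LieSubmodule.lie_mem_lie (f.mem_ker.mpr hx) (f.mem_ker.mpr hy)
  obtain ⟨g, hg⟩ := exists_comp_eq_id_of_abelian_ker f'_surj abelian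
  have f'_g (q : Q) : f' (g q) = q := LieHom.congr_fun hg q
  refine ⟨g.range.comap π, fun q => ?_, ?_⟩
  · obtain ⟨x, hx⟩ := π_surj (g q)
    exact ⟨⟨x, q, hx.symm⟩, (f'_apply x).symm.trans (by rw [hx, f'_g])⟩
  · rintro ⟨x, q, hq⟩ hx
    have q_eq_zero : q = 0 := by
      rw [← f'_g q]
      exact (congrArg f' hq).trans ((f'_apply x).trans hx)
    exact (π_eq_zero x).mp (hq.symm.trans (by rw [q_eq_zero]; exact g.map_zero))

theorem exists_comp_eq_id_of_derivedSeriesOfIdeal_eq_bot (hf : Function.Surjective f) {k : ℕ}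
    (hk : derivedSeriesOfIdeal K L k f.ker = ⊥) : ∃ g : Q →ₗ⁅K⁆ L, f.comp g = LieHom.id := by
  induction k generalizing L with
  | zero =>
    refine exists_comp_eq_id_of_abelian_ker hf fun x hx y _ => ?_
    have ker_eq_bot : f.ker = ⊥ := hk
    rw [ker_eq_bot, LieSubmodule.mem_bot] at hx
    rw [hx, zero_lie]
  | succ k ih =>
    obtain ⟨S, surj, ker_le⟩ := exists_surjective_comp_incl_ker_le_comap_lie hf
    obtain ⟨g, hg⟩ : ∃ g : Q →ₗ⁅K⁆ S, (f.comp S.incl).comp g = LieHom.id := by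
      refine ih surj (LieIdeal.bot_of_map_eq_bot (f := S.incl) Subtype.val_injective ?_)
      rw [eq_bot_iff, ← hk, derivedSeriesOfIdeal_add]
      exact map_derivedSeriesOfIdeal_le S.incl (LieIdeal.map_le_iff_le_comap.mpr ker_le) k
    exact ⟨S.incl.comp g, hg⟩

theorem exists_comp_eq_id_of_isSolvable_ker (hf : Function.Surjective f) [IsSolvable f.ker] :
    ∃ g : Q →ₗ⁅K⁆ L, f.comp g = LieHom.id :=
  let ⟨_, hk⟩ := isSolvable_ideal_iff.mp ‹IsSolvable f.ker›
  exists_comp_eq_id_of_derivedSeriesOfIdeal_eq_bot hf hk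

theorem exists_leviSubalgebra_le {R : LieIdeal K L} [IsSolvable R] [HasTrivialRadical K (L ⧸ R)]
    {Z : LieSubalgebra K L} (hZ : R.toSubmodule ⊔ Z.toSubmodule = ⊤) :
    ∃ S ≤ Z, IsSemisimple K S ∧ IsCompl R.toSubmodule S.toSubmodule := by
  have : FiniteDimensional K (L ⧸ R) := inferInstanceAs (FiniteDimensional K (L ⧸ R.toSubmodule))
  let π := quotientMk R
  have surj : Function.Surjective (π.comp Z.incl) := by
    intro q
    obtain ⟨x, rfl⟩ := quotientMk_surjective R q
    obtain ⟨r, hr, z, hz, rfl⟩ := Submodule.mem_sup.mp (hZ.ge (Submodule.mem_top (x := x)))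
    have π_r : π r = 0 := π.mem_ker.mp (by rwa [ker_quotientMk])
    refine ⟨⟨z, hz⟩, ?_⟩
    calc π z = π r + π z := by rw [π_r, zero_add]
      _ = π (r + z) := (map_add π r z).symm
  have : IsSolvable (π.comp Z.incl).ker := by
    have : IsSolvable π.ker := by rwa [ker_quotientMk]
    have : IsSolvable Z.incl.ker := by
      rw [Z.incl.ker_eq_bot.mpr Subtype.val_injective]
      infer_instance
    exact isSolvable_comap Z.incl π.ker
  obtain ⟨g, hg⟩ := exists_comp_eq_id_of_isSolvable_ker surj
  have : HasTrivialRadical K (Z.incl.comp g).range := hasTrivialRadical_range _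
  refine ⟨(Z.incl.comp g).range, ?_, inferInstance, ?_⟩
  · rintro _ ⟨q, rfl⟩
    exact (g q).2
  · have compl := isCompl_ker_range_of_comp_eq_id (f := π) (g := Z.incl.comp g) hg
    rwa [ker_quotientMk] at compl

end Levi

theorem sup_annihilator_eq_top {R L : Type*} [CommRing R] [LieRing L] [LieAlgebra R L]
    {I : LieIdeal R L} {𝔨 : LieSubalgebra R L} (h𝔨 : ∀ x ∈ 𝔨, x ∈ I) {N : LieSubmodule R 𝔨 L}
    (hN : IsCompl I.toSubmodule N.toSubmodule) :
    I.toSubmodule ⊔ (annihilator R L (𝔨 : Set L)).toSubmodule = ⊤ := by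
  rw [eq_top_iff, ← hN.sup_eq_top]
  refine sup_le_sup_left (fun n hn y hy => ?_) _
  have lie_eq_zero : ⁅y, n⁆ = 0 := Submodule.disjoint_def.mp hN.disjoint _
    (lie_mem_left R L I y n (h𝔨 y hy)) (N.lie_mem (x := ⟨y, hy⟩) hn)
  rw [← lie_skew, lie_eq_zero, neg_zero]

end LeviDecomposition

theorem levi_subalgebra_centralizing_compact_part_general
    {K 𝔤 : Type*} [Field K] [CharZero K] [LieRing 𝔤] [LieAlgebra K 𝔤] [FiniteDimensional K 𝔤]
    {𝔨 : LieSubalgebra K 𝔤} (h𝔨 : ∀ x ∈ 𝔨, x ∈ LieAlgebra.radical K 𝔤)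
    {N : LieSubmodule K 𝔨 𝔤} (hN : IsCompl (LieAlgebra.radical K 𝔤).toSubmodule N.toSubmodule) :
    ∃ 𝔰 : LieSubalgebra K 𝔤, LieAlgebra.IsSemisimple K 𝔰 ∧
      IsCompl (LieAlgebra.radical K 𝔤).toSubmodule 𝔰.toSubmodule ∧
      ∀ x ∈ 𝔰, ∀ y ∈ 𝔨, ⁅x, y⁆ = 0 := by
  have := LeviDecomposition.hasTrivialRadical_quotient_radical (R := K) (L := 𝔤)
  obtain ⟨𝔰, le_annihilator, semisimple, compl⟩ :=
    LeviDecomposition.exists_leviSubalgebra_le (LeviDecomposition.sup_annihilator_eq_top h𝔨 hN)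
  exact ⟨𝔰, semisimple, compl, fun x hx => le_annihilator hx⟩

/-- Let `𝔤` be a finite-dimensional real Lie algebra with solvable radical
`𝔯`, and let `𝔨 ⊆ 𝔯` be a subalgebra such that `𝔤` is a semisimple `𝔨`-module under the
adjoint action.  Then there is a Levi subalgebra `𝔰` of `𝔤` (a semisimple subalgebra with
`𝔤 = 𝔯 ⊕ 𝔰` as vector spaces) which centralizes `𝔨`. -/
theorem levi_subalgebra_centralizing_compact_part
    (𝔤 : Type*) [LieRing 𝔤] [LieAlgebra ℝ 𝔤] [FiniteDimensional ℝ 𝔤]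
    (𝔨 : LieSubalgebra ℝ 𝔤)
    (h𝔨 : ∀ x ∈ 𝔨, x ∈ LieAlgebra.radical ℝ 𝔤)
    (hss : ∀ N : LieSubmodule ℝ 𝔨 𝔤, ∃ N' : LieSubmodule ℝ 𝔨 𝔤, IsCompl N N') :
    ∃ 𝔰 : LieSubalgebra ℝ 𝔤, LieAlgebra.IsSemisimple ℝ 𝔰 ∧
      ((LieAlgebra.radical ℝ 𝔤 : Submodule ℝ 𝔤) ⊔ (𝔰 : Submodule ℝ 𝔤) = ⊤) ∧
      ((LieAlgebra.radical ℝ 𝔤 : Submodule ℝ 𝔤) ⊓ (𝔰 : Submodule ℝ 𝔤) = ⊥) ∧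
      ∀ x ∈ 𝔰, ∀ y ∈ 𝔨, ⁅x, y⁆ = 0 := by
  let 𝔯 : LieSubmodule ℝ 𝔨 𝔤 :=
    { (LieAlgebra.radical ℝ 𝔤).toSubmodule with lie_mem := (LieAlgebra.radical ℝ 𝔤).lie_mem }
  obtain ⟨N, hN⟩ := hss 𝔯
  obtain ⟨𝔰, semisimple, compl, lie_eq_zero⟩ := levi_subalgebra_centralizing_compact_part_general
    h𝔨 (LieSubmodule.isCompl_toSubmodule.mpr hN)
  exact ⟨𝔰, semisimple, compl.sup_eq_top, compl.inf_eq_bot, lie_eq_zero⟩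
end

section
/- Let V be a finite-dimensional real vector space, let G ⊆ GL(V) be a subgroup which is a definable subset (in an o-minimal expansion of the real ordered field) of the space End(V) of linear endomorphisms, and let F be a finite central subgroup of G. Then there exist a finite-dimensional real vector space W and a continuous group homomorphism σ : G → GL(W), definable in the same structure, whose kernel is exactly F. In particular, the quotient G/F is topologically isomorphic to the definably linear group σ(G). -/
open FirstOrder

/-- A set of reals is a finite union of singletons and open intervals (possibly unbounded). -/
def IsFiniteUnionOfPointsAndIntervals (s : Set ℝ) : Prop :=
  ∃ (k : ℕ) (f : Fin k → Set ℝ),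
    (∀ i, (∃ a, f i = {a}) ∨ (∃ a b, f i = Set.Ioo a b) ∨
      (∃ a, f i = Set.Iio a) ∨ (∃ a, f i = Set.Ioi a) ∨ f i = Set.univ) ∧
    s = ⋃ i, f i

/-- An o-minimal expansion of the real ordered field: a first-order language together with
an interpretation on `ℝ` in which the graphs of addition and multiplication and the order
relation are definable without parameters, and every subset of `ℝ` definable with parameters
is a finite union of singletons and open intervals. -/
structure OMinimalRealExpansion : Type 1 where
  L : FirstOrder.Language.{0, 0}
  str : L.Structure ℝ
  definable_add : @Set.Definable ℝ (∅ : Set ℝ) L str _ {x : Fin 3 → ℝ | x 0 + x 1 = x 2}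
  definable_mul : @Set.Definable ℝ (∅ : Set ℝ) L str _ {x : Fin 3 → ℝ | x 0 * x 1 = x 2}
  definable_lt : @Set.Definable ℝ (∅ : Set ℝ) L str _ {x : Fin 2 → ℝ | x 0 < x 1}
  o_minimal : ∀ s : Set ℝ,
    @Set.Definable ℝ (Set.univ : Set ℝ) L str _ {x : Fin 1 → ℝ | x 0 ∈ s} →
    IsFiniteUnionOfPointsAndIntervals s

/-- `S.DefSet s` : the set `s` is definable with parameters in the o-minimal structure `S`. -/
def OMinimalRealExpansion.DefSet (S : OMinimalRealExpansion) {α : Type} (s : Set (α → ℝ)) :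
    Prop :=
  @Set.Definable ℝ (Set.univ : Set ℝ) S.L S.str α s

/-- A definable group in an o-minimal expansion of the reals: a definable subset of `ℝⁿ`
together with a group structure whose multiplication has definable graph.  It is regarded as a
topological group with the subspace topology from `ℝⁿ`. -/
def IsDefinableGroup (S : OMinimalRealExpansion) {n : ℕ} (c : Set (Fin n → ℝ)) [Group c] :
    Prop :=
  S.DefSet {x : Fin n → ℝ | x ∈ c} ∧
  S.DefSet {x : Fin 3 × Fin n → ℝ | ∃ a b : c,
    ((a : Fin n → ℝ) = fun j => x (0, j)) ∧ ((b : Fin n → ℝ) = fun j => x (1, j)) ∧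
    ((↑(a * b) : Fin n → ℝ) = fun j => x (2, j))}

/-- A topological group (in particular, a Lie group) is Lie-isomorphic to a definable group if
there is a group isomorphism with a definable group in some o-minimal expansion of the real
ordered field which is also a homeomorphism. -/
def IsLieIsomorphicToDefinableGroup (G : Type*) [Group G] [TopologicalSpace G] : Prop :=
  ∃ (S : OMinimalRealExpansion) (n : ℕ) (c : Set (Fin n → ℝ)) (grp : Group c),
    letI := grp
    IsDefinableGroup S c ∧ ∃ e : G ≃* c, Continuous e ∧ Continuous e.symm

/-- A subgroup of `GL_m(ℝ)` which is a definable subset of the matrix space `M_m(ℝ)` in the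
o-minimal structure `S`. -/
def IsDefinableSubgroupOfGL (S : OMinimalRealExpansion) (m : ℕ)
    (G₁ : Subgroup (GL (Fin m) ℝ)) : Prop :=
  S.DefSet {x : Fin m × Fin m → ℝ | ∃ g : GL (Fin m) ℝ, g ∈ G₁ ∧
    ∀ p : Fin m × Fin m, (g : Matrix (Fin m) (Fin m) ℝ) p.1 p.2 = x p}

/-- A topological group is Lie-isomorphic to a definably linear group if there are `m`, an
o-minimal expansion of the real ordered field, a subgroup `G₁` of `GL_m(ℝ)` which is a
definable subset of `M_m(ℝ)`, and a group isomorphism onto `G₁` that is a homeomorphism. -/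
def IsLieIsomorphicToDefinablyLinearGroup (G : Type*) [Group G] [TopologicalSpace G] : Prop :=
  ∃ (m : ℕ) (S : OMinimalRealExpansion) (G₁ : Subgroup (GL (Fin m) ℝ)),
    IsDefinableSubgroupOfGL S m G₁ ∧ ∃ e : G ≃* G₁, Continuous e ∧ Continuous e.symm

/-!
The group `G` acts by right translation on the finite-dimensional space of polynomial functions of
degree at most `|F|` on the matrix algebra. As `F` is normal, `G` preserves the subspace of
`F`-invariant functions, and `F` acts trivially there. Nothing else does: if `g ∉ F`, some linear
functional `l` satisfies `l (g * f - 1) ≠ 0` for every `f ∈ F`, and the invariant polynomial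
`x ↦ ∏ f ∈ F, l (x * f - 1)` vanishes at `1` but not at `g`. Evaluations at points span the dual of
a finite-dimensional space of functions, so the matrix coefficients of this representation are
polynomial functions of `g`, hence continuous and definable.
-/

section PolynomialFunctions

open Module

variable {K M N : Type*} [CommSemiring K] [AddCommMonoid M] [Module K M] [AddCommMonoid N]
  [Module K N]

variable (K M) in
/-- The functions `M → K` that are polynomial of degree at most `n`, encoded as the `n`-th power of
the space of affine functions (the sums of a constant and a linear functional). -/
def polyFunDegreeLE (n : ℕ) : Submodule K (M → K) :=
  (1 ⊔ LinearMap.range (LinearMap.ltoFun K M K K)) ^ n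

lemma polyFunDegreeLE_fg [Module.Finite K (Dual K M)] (n : ℕ) :
    (polyFunDegreeLE K M n).FG := by
  have hlin : (LinearMap.range (LinearMap.ltoFun K M K K)).FG := by
    rw [LinearMap.range_eq_map]
    exact Finite.fg_top.map _
  have hone : (1 : Submodule K (M → K)).FG := by
    rw [Submodule.one_eq_span]
    exact Submodule.fg_span_singleton 1
  exact (hone.sup hlin).pow n

instance [Module.Finite K (Dual K M)] (n : ℕ) : Module.Finite K (polyFunDegreeLE K M n) :=
  Finite.iff_fg.mpr (polyFunDegreeLE_fg n)

lemma comp_linearMap_mem_polyFunDegreeLE {n : ℕ} {p : N → K}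
    (hp : p ∈ polyFunDegreeLE K N n) (T : M →ₗ[K] N) :
    p ∘ T ∈ polyFunDegreeLE K M n := by
  let precomp : (N → K) →ₐ[K] (M → K) := AlgHom.pi fun x => Pi.evalAlgHom K _ (T x)
  have hlin : (LinearMap.range (LinearMap.ltoFun K N K K)).map precomp.toLinearMap ≤
      LinearMap.range (LinearMap.ltoFun K M K K) := by
    rintro _ ⟨_, ⟨l, rfl⟩, rfl⟩
    exact ⟨l ∘ₗ T, rfl⟩
  have hpow : (polyFunDegreeLE K N n).map precomp.toLinearMap ≤ polyFunDegreeLE K M n := by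
    rw [polyFunDegreeLE, Submodule.map_pow, Submodule.map_sup, Submodule.map_one]
    exact pow_le_pow_left' (sup_le_sup_left hlin 1) n
  exact hpow (Submodule.mem_map_of_mem hp)

lemma polyFunDegreeLE_le_subalgebra {ι : Type*} [Finite ι] (b : Basis ι K M)
    {B : Subalgebra K (M → K)} (hB : ∀ i, ⇑(b.coord i) ∈ B) (n : ℕ) :
    polyFunDegreeLE K M n ≤ Subalgebra.toSubmodule B := by
  have := Fintype.ofFinite ι
  have hlin : LinearMap.range (LinearMap.ltoFun K M K K) ≤ Subalgebra.toSubmodule B := by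
    rintro _ ⟨l, rfl⟩
    rw [← b.sum_dual_apply_smul_coord l, map_sum]
    refine sum_mem fun i _ => ?_
    rw [map_smul]
    exact Submodule.smul_mem _ _ (hB i)
  have haff : 1 ⊔ LinearMap.range (LinearMap.ltoFun K M K K) ≤ Subalgebra.toSubmodule B :=
    sup_le (Submodule.one_le.mpr B.one_mem) hlin
  exact fun p hp => Submodule.pow_induction_on_left _ (C := (· ∈ B)) B.algebraMap_mem
    (fun _ _ => B.add_mem) (fun _ hq _ => B.mul_mem (haff hq)) hp

lemma prod_mem_pow_card {R A ι : Type*} [CommSemiring R] [CommSemiring A] [Algebra R A]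
    {P : Submodule R A} {f : ι → A} (hf : ∀ i, f i ∈ P) (s : Finset ι) :
    ∏ i ∈ s, f i ∈ P ^ s.card := by
  classical
  induction s using Finset.induction with
  | empty => exact Submodule.one_le.mp le_rfl
  | insert i s hi ih =>
    rw [Finset.prod_insert hi, Finset.card_insert_of_notMem hi, pow_succ']
    exact Submodule.mul_mem_mul (hf i) ih

end PolynomialFunctions

section TranslationRepresentation

variable {K A G : Type*} [CommRing K] [Ring A] [Algebra K A] [Group G]

variable (K) in
/-- The representation of `G` on the polynomial functions of degree at most `n` on an algebra `A`,
acting through `φ : G →* A` by right translation: `(g • p) x = p (x * φ g)`. -/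
def translationRep (φ : G →* A) (n : ℕ) : Representation K G (polyFunDegreeLE K A n) where
  toFun g := (LinearMap.funLeft K K (· * φ g)).restrict fun _ hp =>
    comp_linearMap_mem_polyFunDegreeLE hp (LinearMap.mulRight K (φ g))
  map_one' := by ext p x; simp
  map_mul' g h := by
    ext p x
    exact congrArg p.1 (by simp only [map_mul, mul_assoc])

/-- `∏ f ∈ F, l (x * φ f - 1)`: an `F`-invariant polynomial function vanishing at `1`, since its
factor at `f = 1` does. -/
def orbitProduct (φ : G →* A) (F : Subgroup G) [Fintype F] (l : Module.Dual K A) (x : A) : K :=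
  ∏ f : F, l (x * φ f - 1)

lemma orbitProduct_mem_polyFunDegreeLE (φ : G →* A) (F : Subgroup G) [Fintype F]
    (l : Module.Dual K A) : orbitProduct φ F l ∈ polyFunDegreeLE K A (Fintype.card F) := by
  have haff (f : F) : (fun x => l (x * φ f - 1)) ∈
      1 ⊔ LinearMap.range (LinearMap.ltoFun K A K K) := by
    have hsplit : (fun x => l (x * φ f - 1)) = algebraMap K (A → K) (-l 1) +
        LinearMap.ltoFun K A K K (l ∘ₗ LinearMap.mulRight K (φ f)) := by
      ext x
      simp [sub_eq_neg_add]
    rw [hsplit]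
    exact Submodule.add_mem_sup (Submodule.algebraMap_mem _) (LinearMap.mem_range_self _ _)
  have hprod : orbitProduct φ F l = ∏ f : F, fun x => l (x * φ f - 1) := by
    ext x
    simp [orbitProduct]
  rw [hprod]
  exact prod_mem_pow_card haff Finset.univ

lemma orbitProduct_mul_right (φ : G →* A) (F : Subgroup G) [Fintype F] (l : Module.Dual K A)
    (f : F) (x : A) : orbitProduct φ F l (x * φ f) = orbitProduct φ F l x :=
  Fintype.prod_equiv (Equiv.mulLeft f) _ _ fun f' => by simp [mul_assoc]

lemma orbitProduct_one (φ : G →* A) (F : Subgroup G) [Fintype F] (l : Module.Dual K A) :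
    orbitProduct φ F l 1 = 0 :=
  Finset.prod_eq_zero (Finset.mem_univ 1) (by simp)

end TranslationRepresentation

section Kernel

variable {K A G : Type*} [Field K] [Ring A] [Algebra K A] [Group G]

lemma exists_polynomial_translationRep_coeff [FiniteDimensional K A] (φ : G →* A) {n : ℕ}
    (ψ : Module.Dual K (polyFunDegreeLE K A n)) (p : polyFunDegreeLE K A n) :
    ∃ a ∈ polyFunDegreeLE K A n, ∀ g, ψ (translationRep K φ n g p) = a (φ g) := by
  let eval (x : A) : Module.Dual K (polyFunDegreeLE K A n) :=
    LinearMap.proj x ∘ₗ (polyFunDegreeLE K A n).subtype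
  have hspan : Submodule.span K (Set.range eval) = ⊤ :=
    Submodule.span_eq_top_of_ne_zero fun q hq => by
      obtain ⟨x, hx⟩ := Function.ne_iff.mp fun h => hq (Subtype.ext h)
      exact ⟨eval x, ⟨x, rfl⟩, hx⟩
  have hψ : ψ ∈ Submodule.span K (Set.range eval) := hspan ▸ Submodule.mem_top
  induction hψ using Submodule.span_induction with
  | mem ψ h =>
    obtain ⟨x, rfl⟩ := h
    exact ⟨_, comp_linearMap_mem_polyFunDegreeLE p.2 (LinearMap.mulLeft K x), fun g => rfl⟩
  | zero => exact ⟨0, zero_mem _, fun g => rfl⟩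
  | add ψ₁ ψ₂ _ _ ih₁ ih₂ =>
    obtain ⟨a₁, ha₁, h₁⟩ := ih₁
    obtain ⟨a₂, ha₂, h₂⟩ := ih₂
    exact ⟨a₁ + a₂, add_mem ha₁ ha₂, fun g => congrArg₂ (· + ·) (h₁ g) (h₂ g)⟩
  | smul c ψ _ ih =>
    obtain ⟨a, ha, h⟩ := ih
    exact ⟨c • a, Submodule.smul_mem _ c ha, fun g => congrArg (c * ·) (h g)⟩

lemma exists_orbitProduct_ne_zero [Infinite K] {φ : G →* A} (hφ : Function.Injective φ)
    {F : Subgroup G} [Fintype F] {g : G} (hg : g ∉ F) :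
    ∃ l : Module.Dual K A, orbitProduct φ F l (φ g) ≠ 0 := by
  have hne (f : F) : φ g * φ f - 1 ≠ 0 := fun h => hg <| by
    have hgf : g * f = 1 := hφ (by rw [map_mul, map_one, sub_eq_zero.mp h])
    exact eq_inv_of_mul_eq_one_left hgf ▸ F.inv_mem f.2
  obtain ⟨l, hl⟩ := Module.exists_dual_forall_apply_ne_zero (K := K) _ hne
  exact ⟨l, Finset.prod_ne_zero_iff.mpr fun f _ => hl f⟩

lemma ker_toInvariants_translationRep [Infinite K] {φ : G →* A} (hφ : Function.Injective φ)
    (F : Subgroup G) [F.Normal] [Fintype F] :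
    ((translationRep K φ (Fintype.card F)).toInvariants F).ker = F := by
  ext g
  refine ⟨fun hg => ?_, fun hg => ?_⟩
  · by_contra hgF
    obtain ⟨l, hl⟩ := exists_orbitProduct_ne_zero (K := K) hφ hgF
    let p : Representation.invariants ((translationRep K φ (Fintype.card F)).comp F.subtype) :=
      ⟨⟨orbitProduct φ F l, orbitProduct_mem_polyFunDegreeLE φ F l⟩,
        fun f => Subtype.ext (funext (orbitProduct_mul_right φ F l f))⟩
    have hfix : (translationRep K φ (Fintype.card F)).toInvariants F g p = p :=
      LinearMap.congr_fun hg p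
    have heval : orbitProduct φ F l (1 * φ g) = orbitProduct φ F l 1 :=
      congrArg (fun q => q.1.1 1) hfix
    rw [one_mul, orbitProduct_one] at heval
    exact hl heval
  · exact LinearMap.ext fun p => Subtype.ext (p.2 ⟨g, hg⟩)

lemma exists_matrix_toInvariants {V : Type*} [AddCommGroup V] [Module K V] [FiniteDimensional K V]
    (ρ : Representation K G V) (F : Subgroup G) [F.Normal] :
    ∃ (e : ℕ) (τ : G →* Matrix (Fin e) (Fin e) K),
      (∀ i j, ∃ (ψ : Module.Dual K V) (v : V), ∀ g, τ g i j = ψ (ρ g v)) ∧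
      τ.ker = (ρ.toInvariants F).ker := by
  let b := Module.finBasis K (Representation.invariants (ρ.comp F.subtype))
  let toMat := MonoidHomClass.toMonoidHom (LinearMap.toMatrixAlgEquiv b)
  refine ⟨_, toMat.comp (ρ.toInvariants F), fun i j => ?_, ?_⟩
  · obtain ⟨ψ, hψ⟩ := LinearMap.exists_extend (b.coord i)
    refine ⟨ψ, b j, fun g => (LinearMap.toMatrixAlgEquiv_apply b _ i j).trans ?_⟩
    exact (LinearMap.congr_fun hψ (ρ.toInvariants F g (b j))).symm
  · ext g
    exact map_eq_one_iff (LinearMap.toMatrixAlgEquiv b) (LinearMap.toMatrixAlgEquiv b).injective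

theorem exists_polynomial_rep_ker_eq [Infinite K] [FiniteDimensional K A] {φ : G →* A}
    (hφ : Function.Injective φ) (F : Subgroup G) [F.Normal] [Finite F] :
    ∃ (n e : ℕ) (τ : G →* Matrix (Fin e) (Fin e) K),
      (∀ i j, ∃ a ∈ polyFunDegreeLE K A n, ∀ g, τ g i j = a (φ g)) ∧ τ.ker = F := by
  have := Fintype.ofFinite F
  obtain ⟨e, τ, hcoeff, hker⟩ := exists_matrix_toInvariants (translationRep K φ (Fintype.card F)) F
  refine ⟨Fintype.card F, e, τ, fun i j => ?_, hker.trans (ker_toInvariants_translationRep hφ F)⟩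
  obtain ⟨ψ, p, hψ⟩ := hcoeff i j
  simpa only [hψ] using exists_polynomial_translationRep_coeff φ ψ p

end Kernel

section Definability

lemma definableFun_binop {M α : Type*} {L : Language} [L.Structure M] {A : Set M}
    {op : M → M → M} (hop : A.Definable L {x : Fin 3 → M | op (x 0) (x 1) = x 2})
    {f g : (α → M) → M} (hf : A.DefinableFun L f) (hg : A.DefinableFun L g) :
    A.DefinableFun L fun v => op (f v) (g v) := by
  -- in the graph of a function on `Fin 2 → M`, the value has index `none : Option (Fin 2)`
  have hop' : A.DefinableFun L fun v : Fin 2 → M => op (v 0) (v 1) :=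
    hop.preimage_comp (![some 0, some 1, none] : Fin 3 → Option (Fin 2))
  have hpair : A.DefinableMap L fun v => ![f v, g v] := by
    intro i
    fin_cases i
    exacts [hf, hg]
  exact hop'.comp hpair

lemma definable_range_sumElim {M α β X : Type*} [Finite α] [Finite β] {L : Language}
    [L.Structure M] {A : Set M} {m : X → α → M} (hm : A.Definable L (Set.range m))
    {f : β → (α → M) → M} (hf : ∀ i, A.DefinableFun L (f i)) :
    A.Definable L (Set.range fun g => Sum.elim (m g) fun i => f i (m g)) := by
  have hgraph (i : β) :
      A.Definable L {x : α ⊕ β → M | f i (x ∘ Sum.inl) = x (Sum.inr i)} :=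
    Set.DefinableFun.ofPred_eq
      (Set.DefinableFun.comp (g := (· ∘ Sum.inl)) (fun _ => .proj L) (hf i)) (.proj L)
  convert (hm.preimage_comp Sum.inl).inter (Set.definable_iInter_of_finite hgraph) using 1
  ext x
  simp only [Set.mem_range, Set.mem_inter_iff, Set.mem_preimage, Set.mem_iInter, Set.mem_ofPred_eq]
  constructor
  · rintro ⟨g, rfl⟩
    exact ⟨⟨g, rfl⟩, fun i => rfl⟩
  · rintro ⟨⟨g, hg⟩, hx⟩
    refine ⟨g, funext ?_⟩
    rintro (p | i)
    · exact congrFun hg p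
    · exact (congrArg (f i) hg).trans (hx i)

variable {K : Type*} [CommSemiring K] {L : Language} [L.Structure K]

/-- The algebra of functions `(α → K) → K` definable with parameters in a structure on `K` that
defines the ring operations. -/
def definableSubalgebra (hadd : Set.univ.Definable L {x : Fin 3 → K | x 0 + x 1 = x 2})
    (hmul : Set.univ.Definable L {x : Fin 3 → K | x 0 * x 1 = x 2}) (α : Type*) :
    Subalgebra K ((α → K) → K) where
  carrier := {f | Set.univ.DefinableFun L f}
  add_mem' := definableFun_binop hadd
  mul_mem' := definableFun_binop hmul
  algebraMap_mem' r := L.definableFun_const α (Set.mem_univ r)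

lemma definableFun_of_mem_polyFunDegreeLE
    (hadd : Set.univ.Definable L {x : Fin 3 → K | x 0 + x 1 = x 2})
    (hmul : Set.univ.Definable L {x : Fin 3 → K | x 0 * x 1 = x 2}) {α : Type*} [Finite α] {n : ℕ}
    {p : (α → K) → K} (hp : p ∈ polyFunDegreeLE K (α → K) n) : Set.univ.DefinableFun L p :=
  polyFunDegreeLE_le_subalgebra (Pi.basisFun K α) (B := definableSubalgebra hadd hmul α)
    (fun _ => .proj L) n hp

end Definability

lemma continuous_of_mem_polyFunDegreeLE {K α : Type*} [CommSemiring K] [TopologicalSpace K]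
    [IsTopologicalSemiring K] [Finite α] {n : ℕ} {p : (α → K) → K}
    (hp : p ∈ polyFunDegreeLE K (α → K) n) : Continuous p :=
  polyFunDegreeLE_le_subalgebra (Pi.basisFun K α) (B := continuousSubalgebra)
    (fun i => continuous_apply i) n hp

lemma continuous_toHomUnits {G M : Type*} [Group G] [TopologicalSpace G] [ContinuousInv G]
    [Monoid M] [TopologicalSpace M] {f : G →* M} (hf : Continuous f) : Continuous f.toHomUnits :=
  Units.continuous_iff.mpr
    ⟨hf, by simpa [← map_inv, Function.comp_def] using hf.comp continuous_inv⟩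

lemma normal_of_le_center {G : Type*} [Group G] {H : Subgroup G} (hH : H ≤ Subgroup.center G) :
    H.Normal :=
  ⟨fun h hh g => by rwa [Subgroup.mem_center_iff.mp (hH hh) g, mul_inv_cancel_right]⟩

theorem definable_rep_with_kernel_finite_central_general {K : Type*} [Field K] [Infinite K]
    [TopologicalSpace K] [IsTopologicalSemiring K] (L : Language) [L.Structure K]
    (hadd : Set.univ.Definable L {x : Fin 3 → K | x 0 + x 1 = x 2})
    (hmul : Set.univ.Definable L {x : Fin 3 → K | x 0 * x 1 = x 2})
    {ι : Type*} [Fintype ι] [DecidableEq ι] (G : Subgroup (GL ι K))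
    (hG : Set.univ.Definable L {x : ι × ι → K | ∃ g : GL ι K, g ∈ G ∧
      ∀ p : ι × ι, (g : Matrix ι ι K) p.1 p.2 = x p})
    (F : Subgroup G) [Finite F] [F.Normal] :
    ∃ (e : ℕ) (σ : G →* GL (Fin e) K), Continuous σ ∧
      Set.univ.Definable L {x : (ι × ι) ⊕ (Fin e × Fin e) → K | ∃ g : G,
        (∀ p : ι × ι, ((g : GL ι K) : Matrix ι ι K) p.1 p.2 = x (Sum.inl p)) ∧
        ∀ q : Fin e × Fin e, (σ g : Matrix (Fin e) (Fin e) K) q.1 q.2 = x (Sum.inr q)} ∧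
      σ.ker = F := by
  let φ : G →* Matrix ι ι K := (Units.coeHom _).comp G.subtype
  have hφ : Function.Injective φ := Units.val_injective.comp Subtype.val_injective
  obtain ⟨n, e, τ, hτ, hker⟩ := exists_polynomial_rep_ker_eq (K := K) hφ F
  let entries (g : G) (p : ι × ι) : K := (g : GL ι K) p.1 p.2
  have hpoly (q : Fin e × Fin e) : ∃ a ∈ polyFunDegreeLE K (ι × ι → K) n,
      ∀ g, τ g q.1 q.2 = a (entries g) := by
    obtain ⟨a, ha, hτa⟩ := hτ q.1 q.2
    exact ⟨_, comp_linearMap_mem_polyFunDegreeLE ha (LinearEquiv.curry K K ι ι).toLinearMap, hτa⟩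
  choose a ha hτa using hpoly
  refine ⟨e, τ.toHomUnits, continuous_toHomUnits ?_, ?_, by rwa [MonoidHom.ker_toHomUnits]⟩
  · have hentries : Continuous entries := continuous_pi fun p =>
      (Units.continuous_val.comp continuous_subtype_val).matrix_elem p.1 p.2
    refine continuous_matrix fun i j => ?_
    simp only [hτa (i, j)]
    exact (continuous_of_mem_polyFunDegreeLE (ha (i, j))).comp hentries
  · have hrange : Set.univ.Definable L (Set.range entries) := by
      simpa [Set.range, entries, funext_iff] using hG
    convert definable_range_sumElim hrange
      fun q => definableFun_of_mem_polyFunDegreeLE hadd hmul (ha q) using 1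
    ext x
    simp [entries, hτa, funext_iff]

/-- Let `G ⊆ GL(V)` be a subgroup which is a definable subset of `End(V)`
(identifying `V` with `ℝᵈ` and `End(V)` with `M_d(ℝ)`), and let `F` be a finite central
subgroup of `G`.  Then there is a continuous definable representation `σ` of `G` on a
finite-dimensional real vector space whose kernel is exactly `F`; in particular `G/F` is
topologically isomorphic to the definably linear group `σ(G)`. -/
theorem definable_rep_with_kernel_finite_central
    (St : OMinimalRealExpansion) (d : ℕ) (G : Subgroup (GL (Fin d) ℝ))
    (hGdef : IsDefinableSubgroupOfGL St d G)
    (F : Subgroup G) (hFfin : Finite F) (hFcentral : F ≤ Subgroup.center G) :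
    ∃ (e : ℕ) (σ : G →* GL (Fin e) ℝ), Continuous σ ∧
      St.DefSet {x : (Fin d × Fin d) ⊕ (Fin e × Fin e) → ℝ | ∃ g : G,
        (∀ p : Fin d × Fin d,
          ((g : GL (Fin d) ℝ) : Matrix (Fin d) (Fin d) ℝ) p.1 p.2 = x (Sum.inl p)) ∧
        ∀ q : Fin e × Fin e,
          ((σ g : Matrix (Fin e) (Fin e) ℝ) q.1 q.2 = x (Sum.inr q))} ∧
      σ.ker = F := by
  let := St.str
  have := normal_of_le_center hFcentral
  exact definable_rep_with_kernel_finite_central_general St.L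
    (St.definable_add.mono (Set.empty_subset _)) (St.definable_mul.mono (Set.empty_subset _))
    G hGdef F
end
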